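/- (Cayley's formula, via Prüfer's theorem.) For every integer n ≥ 2, the number of simple graphs on the vertex set Fin n that are trees (connected and acyclic) equals n^{n−2}. -/

import Mathlib

open SimpleGraph

lemma leaf_conn {V : Type} [Fintype V] {T : SimpleGraph V} {m : V} (h : T.Connected)
    (hm : ∃! w, T.Adj m w) : (T.induce {m}ᶜ).Connected := by
  classical
  exact h.induce_compl_singleton_of_degree_eq_one (degree_eq_one_iff_existsUnique_adj.mpr hm)

lemma leaf_tree {V : Type} [Fintype V] {T : SimpleGraph V} {m : V}
    (hm : ∃! w, T.Adj m w) (h : (T.induce {m}ᶜ).IsTree) : T.IsTree := by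
  obtain ⟨w, hw, hu⟩ := hm
  have hc : T.Connected := by
    have key : ∀ x, T.Reachable x w := by
      intro x
      by_cases hx : x = m
      · subst hx; exact hw.reachable
      · exact (h.connected ⟨x, hx⟩ ⟨w, hw.ne'⟩).map (Embedding.induce _).toHom
    have : Nonempty V := ⟨m⟩
    exact ⟨fun x y => (key x).trans (key y).symm⟩
  obtain ⟨T0, h0, ht0⟩ := hc.exists_isTree_le
  have : Nontrivial V := ⟨m, w, hw.ne⟩
  obtain ⟨w', hw'⟩ := ht0.connected.preconnected.exists_adj_of_nontrivial m
  have e : w' = w := hu _ (h0 hw')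
  subst e
  have h1 := leaf_conn ht0.connected ⟨w', hw', fun y hy => hu y (h0 hy)⟩
  have h2 := (isTree_iff_minimal_connected.mp h).le_of_le h1 (fun a b hab => h0 hab)
  have : T = T0 := by
    refine le_antisymm (fun a b hab => ?_) h0
    by_cases ha : a = m
    · subst ha; rw [hu _ hab]; exact hw'
    by_cases hb : b = m
    · subst hb; rw [hu _ hab.symm]; exact hw'.symm
    exact @h2 ⟨a, ha⟩ ⟨b, hb⟩ hab
  rw [this]; exact ht0

def addLeaf {V : Type} {m : V} (T : SimpleGraph ({m}ᶜ : Set V)) (w : ({m}ᶜ : Set V)) :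
    SimpleGraph V where
  Adj a b := (∃ (ha : a ≠ m) (hb : b ≠ m), T.Adj ⟨a, ha⟩ ⟨b, hb⟩) ∨ (a = m ∧ b = w.1) ∨
    (b = m ∧ a = w.1)
  symm := ⟨by
    rintro a b (⟨ha, hb, h⟩ | h | h)
    · exact Or.inl ⟨hb, ha, h.symm⟩
    · exact Or.inr (Or.inr h)
    · exact Or.inr (Or.inl h)⟩
  loopless := ⟨by
    rintro a (⟨ha, hb, h⟩ | ⟨h, h'⟩ | ⟨h, h'⟩)
    · exact h.ne rfl
    · exact w.2 (h'.symm.trans h)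
    · exact w.2 (h'.symm.trans h)⟩

lemma addLeaf_adj_m {V : Type} {m : V} (T : SimpleGraph ({m}ᶜ : Set V)) (w : ({m}ᶜ : Set V)) (b : V) :
    (addLeaf T w).Adj m b ↔ b = w.1 := by
  have := w.2
  constructor
  · rintro (⟨ha, hb, h⟩ | ⟨h, h'⟩ | ⟨h, h'⟩)
    · exact absurd rfl ha
    · exact h'
    · exact h.trans h'
  · exact fun h => Or.inr (Or.inl ⟨rfl, h⟩)

lemma addLeaf_adj {V : Type} {m : V} (T : SimpleGraph ({m}ᶜ : Set V)) (w a b : ({m}ᶜ : Set V)) :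
    (addLeaf T w).Adj a b ↔ T.Adj a b := by
  constructor
  · rintro (⟨ha, hb, h⟩ | ⟨h, h'⟩ | ⟨h, h'⟩)
    · exact h
    · exact absurd h a.2
    · exact absurd h b.2
  · exact fun h => Or.inl ⟨a.2, b.2, h⟩

lemma addLeaf_induce {V : Type} {m : V} (T : SimpleGraph ({m}ᶜ : Set V)) (w : ({m}ᶜ : Set V)) :
    (addLeaf T w).induce {m}ᶜ = T := by
  ext a b; exact addLeaf_adj T w a b

/-- number of trees on `V` with every vertex of `S` a leaf -/
noncomputable def cnt (V : Type) (S : Finset V) : ℕ :=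
  Nat.card {T : SimpleGraph V // T.IsTree ∧ ∀ v ∈ S, ∃! w, T.Adj v w}

lemma cnt_step {V : Type} [Fintype V] [DecidableEq V] (S : Finset V) (m : V) (hm : m ∈ S)
    (hV : 3 ≤ Fintype.card V) :
    cnt V S = cnt ({m}ᶜ : Set V) (S.subtype (· ∈ ({m}ᶜ : Set V))) * (Fintype.card V - S.card) := by
  classical
  have hnt : Nontrivial ({m}ᶜ : Set V) := by
    rw [← Fintype.one_lt_card_iff_nontrivial, Fintype.card_compl_set]
    simp; omega
  have hcard : Nat.card {w : ({m}ᶜ : Set V) // w.1 ∉ S} = Fintype.card V - S.card := by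
    rw [Nat.card_congr (Equiv.subtypeSubtypeEquivSubtype (p := (· ∈ ({m}ᶜ : Set V)))
      (q := (· ∉ S)) (fun {x} hx hxm => hx (by rw [hxm]; exact hm))), ← Finset.card_compl,
      Nat.card_eq_fintype_card, Fintype.card_subtype]
    congr 1; ext x; simp
  rw [cnt, cnt, ← hcard, ← Nat.card_prod]
  symm
  refine Nat.card_eq_of_bijective (fun p => ⟨addLeaf p.1.1 p.2.1, ?_, ?_⟩) ⟨?_, ?_⟩
  · apply leaf_tree (m := m)
    · exact ⟨p.2.1.1, (addLeaf_adj_m _ _ _).2 rfl, fun y hy => (addLeaf_adj_m _ _ _).1 hy⟩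
    · rw [addLeaf_induce]; exact p.1.2.1
  · intro v hv
    by_cases hvm : v = m
    · subst hvm
      exact ⟨p.2.1.1, (addLeaf_adj_m _ _ _).2 rfl, fun y hy => (addLeaf_adj_m _ _ _).1 hy⟩
    · obtain ⟨u, hu, huu⟩ := p.1.2.2 ⟨v, hvm⟩ (by simpa using hv)
      refine ⟨u.1, (addLeaf_adj _ _ ⟨v, hvm⟩ u).2 hu, fun y hy => ?_⟩
      by_cases hym : y = m
      · subst hym
        have := (addLeaf_adj_m _ _ _).1 hy.symm
        exact absurd hv (this ▸ p.2.2)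
      · exact congrArg Subtype.val (huu ⟨y, hym⟩ ((addLeaf_adj _ _ ⟨v, hvm⟩ ⟨y, hym⟩).1 hy))
  · rintro ⟨⟨T, hT⟩, ⟨w, hw⟩⟩ ⟨⟨T', hT'⟩, ⟨w', hw'⟩⟩ h
    have h : addLeaf T w = addLeaf T' w' := congrArg Subtype.val h
    have h1 : T = T' := by rw [← addLeaf_induce T w, h, addLeaf_induce]
    have h2 : w = w' := by
      apply Subtype.ext
      rw [← addLeaf_adj_m T' w', ← h, addLeaf_adj_m]
    subst h1 h2
    rfl
  · rintro ⟨T, hT, hl⟩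
    obtain ⟨w, hw, hwu⟩ := hl m hm
    have hc := leaf_conn hT.connected ⟨w, hw, hwu⟩
    have hwS : w ∉ S := by
      intro hwS
      obtain ⟨y, hy⟩ := hc.preconnected.exists_adj_of_nontrivial ⟨w, hw.ne'⟩
      exact y.2 ((hl w hwS).unique hy hw.symm)
    refine ⟨⟨⟨T.induce {m}ᶜ, ⟨hc, hT.isAcyclic.induce _⟩, ?_⟩, ⟨⟨w, hw.ne'⟩, hwS⟩⟩, ?_⟩
    · rintro v hv
      have hv : v.1 ∈ S := by simpa using hv
      obtain ⟨y, hy⟩ := hc.preconnected.exists_adj_of_nontrivial v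
      exact ⟨y, hy, fun z hz => Subtype.ext ((hl v hv).unique hz hy)⟩
    · apply Subtype.ext
      ext a b
      show (addLeaf _ _).Adj a b ↔ _
      by_cases ha : a = m
      · subst ha
        rw [addLeaf_adj_m]
        exact ⟨fun h => h ▸ hw, fun h => hwu _ h⟩
      by_cases hb : b = m
      · subst hb
        rw [adj_comm, addLeaf_adj_m, adj_comm]
        exact ⟨fun h => h ▸ hw, fun h => hwu _ h⟩
      exact addLeaf_adj _ _ ⟨a, ha⟩ ⟨b, hb⟩

lemma cnt_two {V : Type} [Fintype V] (S : Finset V) (hV : Fintype.card V = 2) : cnt V S = 1 := by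
  have : Nontrivial V := by
    rw [← Fintype.one_lt_card_iff_nontrivial]; omega
  have third : ∀ a b c : V, a ≠ b → a ≠ c → b = c := by
    intro a b c hab hac
    by_contra hbc
    have := Fintype.two_lt_card_iff.mpr ⟨a, b, c, hab, hac, hbc⟩
    omega
  rw [cnt, Nat.card_eq_one_iff_unique]
  refine ⟨⟨?_⟩, ⟨⊤, ⟨connected_top, IsAcyclic.of_card_le_two ?_⟩, ?_⟩⟩
  · have key : ∀ T : SimpleGraph V, T.IsTree → T = ⊤ := by
      intro T hT
      refine top_le_iff.mp fun a b hab => ?_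
      obtain ⟨c, hc⟩ := hT.connected.preconnected.exists_adj_of_nontrivial a
      rw [third a b c hab hc.ne]; exact hc
    rintro ⟨T, hT, _⟩ ⟨T', hT', _⟩
    apply Subtype.ext
    exact (key T hT).trans (key T' hT').symm
  · simp [hV]
  · intro v _
    obtain ⟨w, hw⟩ := exists_ne v
    exact ⟨w, hw.symm, fun y hy => third v y w hy hw.symm⟩

lemma cnt_alt {V : Type} [Fintype V] [DecidableEq V] [Nontrivial V] :
    ∑ S : Finset V, (-1 : ℤ) ^ S.card * (cnt V S : ℤ) = 0 := by
  classical
  have h : ∀ S : Finset V, (cnt V S : ℤ) = ∑ T : SimpleGraph V,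
      if T.IsTree ∧ ∀ v ∈ S, ∃! w, T.Adj v w then 1 else 0 := by
    intro S
    rw [cnt, Nat.card_eq_fintype_card, Fintype.card_subtype]
    simp
  simp_rw [h, Finset.mul_sum]
  rw [Finset.sum_comm]
  refine Finset.sum_eq_zero fun T _ => ?_
  by_cases hT : T.IsTree
  · set L : Finset V := Finset.univ.filter fun v => ∃! w, T.Adj v w with hL
    have hne : L.Nonempty := by
      obtain ⟨v, hv⟩ := hT.exists_vert_degree_one_of_nontrivial
      exact ⟨v, by simpa [hL] using degree_eq_one_iff_existsUnique_adj.mp hv⟩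
    refine Eq.trans ?_ (Finset.sum_powerset_neg_one_pow_card_of_nonempty hne)
    simp only [hT, true_and, mul_ite, mul_one, mul_zero]
    rw [← Finset.sum_filter]
    refine Finset.sum_congr ?_ fun _ _ => rfl
    ext S
    simp [hL, Finset.subset_iff]
  · simp [hT]

lemma fd (N : ℕ) (hN : 2 ≤ N) (V : Type) [Fintype V] [DecidableEq V] (hV : Fintype.card V = N) :
    ∑ S : Finset V, (-1 : ℤ) ^ S.card * ((N - S.card : ℕ) ^ (N - 2) : ℕ) = 0 := by
  have h := congrFun (fwdDiff_iter_pow_eq_zero_of_lt (R := ℤ) (j := N - 2) (n := N) (by omega)) 0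
  rw [fwdDiff_iter_eq_sum_shift, ← Finset.sum_range_reflect] at h
  have h3 := Finset.sum_powerset_apply_card
    (fun k => (-1 : ℤ) ^ k * ((N - k : ℕ) ^ (N - 2) : ℕ)) (x := (Finset.univ : Finset V))
  rw [Finset.powerset_univ, Finset.card_univ, hV] at h3
  rw [h3]
  refine Eq.trans (Finset.sum_congr rfl fun k hk => ?_) h
  have hk' : k ≤ N := by have := Finset.mem_range.mp hk; omega
  have e1 : N + 1 - 1 - k = N - k := by omega
  have e2 : N - (N - k) = k := by omega
  rw [e1, e2, Nat.choose_symm hk']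
  simp
  ring

lemma cnt_eq (n : ℕ) : ∀ (V : Type) [Fintype V] [DecidableEq V] (S : Finset V),
    Fintype.card V = n + 2 → cnt V S = (n + 2 - S.card) ^ n := by
  induction n with
  | zero => intro V _ _ S hV; simpa using cnt_two S hV
  | succ n ih =>
    intro V _ _ S hV
    have hne : ∀ S : Finset V, S.Nonempty → cnt V S = (n + 1 + 2 - S.card) ^ (n + 1) := by
      rintro S ⟨m, hm⟩
      have hc : (S.subtype (· ∈ ({m}ᶜ : Set V))).card = S.card - 1 := by
        rw [Finset.card_subtype, ← Finset.card_erase_of_mem hm]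
        congr 1; ext x; simp [and_comm]
      have hp := Finset.card_pos.mpr ⟨m, hm⟩
      rw [cnt_step S m hm (by omega), ih _ _ (by rw [Fintype.card_compl_set]; simp [hV]), hc, hV,
        pow_succ]
      congr 2; omega
    rcases S.eq_empty_or_nonempty with rfl | hS
    · have : Nontrivial V := by
        rw [← Fintype.one_lt_card_iff_nontrivial]; omega
      have h1 := cnt_alt (V := V)
      have h2 := fd (n + 1 + 2) (by omega) V hV
      rw [← h2, ← sub_eq_zero, ← Finset.sum_sub_distrib, Finset.sum_eq_single ∅] at h1
      · simp at h1
        rw [sub_eq_zero] at h1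
        simp
        exact_mod_cast h1
      · intro S _ hS
        rw [hne S (Finset.nonempty_iff_ne_empty.mpr hS)]
        simp
      · simp
    · exact hne S hS

theorem cayley (n : ℕ) (hn : 2 ≤ n) :
    Nat.card {T : SimpleGraph (Fin n) // T.IsTree} = n ^ (n - 2) := by
  obtain ⟨k, rfl⟩ := Nat.exists_eq_add_of_le' hn
  have := cnt_eq k (Fin (k + 2)) ∅ (by simp)
  simpa [cnt] using this
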